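/- There exists ν₂₀ ∈ (0,1) such that for every ν₂ ∈ (0, ν₂₀] there exists ν₁₀ ∈ (0, ν₂] such that for every ν₁ ∈ (0, ν₁₀] there exists ε₀ > 0 such that for every ε ∈ (0, ε₀] there exists n₀ ∈ ℕ such that for every n ≥ n₀ the following holds: if G = (A ∪ B, E) is an ε-extremal Dirac bipartite graph on 2n vertices, then G is a (ν₁,ν₂)-superextremal graph. -/

import Mathlib

/-- `e(v, X)`: the number of neighbours of `v` in `X`. -/
noncomputable def degOn {V : Type*} (G : SimpleGraph V) (v : V) (X : Set V) : ℕ :=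
  (G.neighborSet v ∩ X).ncard

/-- `ε`-extremal balanced bipartite graph with parts `A`, `B` of size `n`. -/
def EpsExtremal {V : Type*} (G : SimpleGraph V) (A B : Set V) (n : ℕ) (ε : ℝ) : Prop :=
  ∃ A₁ A₂ B₁ B₂ : Set V,
    A₁ ∪ A₂ = A ∧ Disjoint A₁ A₂ ∧ B₁ ∪ B₂ = B ∧ Disjoint B₁ B₂ ∧
    |(A₁.ncard : ℝ) - (A₂.ncard : ℝ)| ≤ ε * n ∧
    |(B₁.ncard : ℝ) - (B₂.ncard : ℝ)| ≤ ε * n ∧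
    (({p : V × V | p.1 ∈ A₁ ∧ p.2 ∈ B₂ ∧ G.Adj p.1 p.2}).ncard : ℝ) ≤ ε * n ^ 2

/-- `(ν₁,ν₂)`-superextremal balanced bipartite graph with parts `A`, `B` of size `n`:
there are partitions `A = A₁ ∪ A₂`, `B = B₁ ∪ B₂` satisfying (Q1)–(Q9). -/
def SuperExtremal {V : Type*} (G : SimpleGraph V) (A B : Set V) (n : ℕ)
    (ν₁ ν₂ : ℝ) : Prop :=
  ∃ A₁ A₂ B₁ B₂ : Set V,
    A₁ ∪ A₂ = A ∧ Disjoint A₁ A₂ ∧ B₁ ∪ B₂ = B ∧ Disjoint B₁ B₂ ∧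
    -- (Q1)
    ((({v ∈ A₁ | ((degOn G v B₁ : ℝ) < (n : ℝ) / 2 - ν₁ * n)}).ncard : ℝ) ≤ ν₁ * n) ∧
    ((({v ∈ A₂ | ((degOn G v B₂ : ℝ) < (n : ℝ) / 2 - ν₁ * n)}).ncard : ℝ) ≤ ν₁ * n) ∧
    -- (Q2)
    (∀ v ∈ A₁, ν₂ * n ≤ (degOn G v B₁ : ℝ)) ∧ (∀ v ∈ A₂, ν₂ * n ≤ (degOn G v B₂ : ℝ)) ∧
    -- (Q3)
    ((({v ∈ B₁ | ((degOn G v A₁ : ℝ) < (n : ℝ) / 2 - ν₁ * n)}).ncard : ℝ) ≤ ν₁ * n) ∧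
    ((({v ∈ B₂ | ((degOn G v A₂ : ℝ) < (n : ℝ) / 2 - ν₁ * n)}).ncard : ℝ) ≤ ν₁ * n) ∧
    -- (Q4)
    (∀ v ∈ B₁, ν₂ * n ≤ (degOn G v A₁ : ℝ)) ∧ (∀ v ∈ B₂, ν₂ * n ≤ (degOn G v A₂ : ℝ)) ∧
    -- (Q5)
    |(A₁.ncard : ℝ) - (B₁.ncard : ℝ)| ≤ ν₁ * n ∧
    |(A₁.ncard : ℝ) - (A₂.ncard : ℝ)| ≤ ν₁ * n ∧
    -- (Q6)
    (A₁.ncard = B₁.ncard ∨ ∀ v ∈ A₁, (degOn G v B₂ : ℝ) ≤ ν₂ * n) ∧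
    -- (Q7)
    (A₁.ncard = B₁.ncard ∨ ∀ v ∈ B₂, (degOn G v A₁ : ℝ) ≤ ν₂ * n) ∧
    -- (Q8)
    B₁.ncard ≤ A₁.ncard ∧
    -- (Q9)
    ((∀ v ∈ A₁, ((A₁.ncard - B₁.ncard : ℕ) : ℝ) / 2 ≤ (degOn G v B₂ : ℝ)) ∨
     (∀ v ∈ B₂, ((A₁.ncard - B₁.ncard : ℕ) : ℝ) / 2 ≤ (degOn G v A₁ : ℝ)))

/-!
A pair of partitions `A = A₁ ∪ A₂`, `B = B₁ ∪ B₂` is encoded by the single vertex set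
`U = A₁ ∪ B₂`. Then (Q1)–(Q4) say that degrees across the cut `(U, Uᶜ)` are large, (Q6) and (Q7) say
that degrees inside `U` are small, and exchanging the roles of the two halves is complementing `U`.

Extremality gives a `U` spanning few edges, so by double counting all but few vertices have almost
all of their neighbours on the other side. Let the few exceptional vertices choose their sides so as
to minimize `e(U, U) - 2 d |U|`, where `d = ν₂ n`: at a minimum every vertex of `U` has at most `d`
neighbours in `U` and every other vertex at least `d`. If `|U| ≥ n`, this is superextremal. If not,
move vertices with at least `d` neighbours in `Uᶜ` into `U` until either `|U| = n`, where (Q6) and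
(Q7) are void, or no vertex of `Uᶜ` has more than `d` neighbours in `Uᶜ`, where `Uᶜ` can play the
role of `U`. Finally, (Q9) follows from the minimum degree alone.
-/

section DegOn

variable {V : Type*} [Finite V] {G : SimpleGraph V} {v : V} {X Y : Set V}

lemma degOn_mono (h : X ⊆ Y) : degOn G v X ≤ degOn G v Y :=
  Set.ncard_le_ncard (Set.inter_subset_inter_right _ h)

lemma degOn_le_ncard : degOn G v X ≤ X.ncard :=
  Set.ncard_le_ncard Set.inter_subset_right

lemma degOn_le_degOn_add_ncard_sdiff : degOn G v X ≤ degOn G v Y + (X \ Y).ncard := by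
  have hcover : G.neighborSet v ∩ X ⊆ (G.neighborSet v ∩ Y) ∪ (X \ Y) := fun u hu => by
    by_cases h : u ∈ Y
    exacts [Or.inl ⟨hu.1, h⟩, Or.inr ⟨hu.2, h⟩]
  exact (Set.ncard_le_ncard hcover).trans (Set.ncard_union_le _ _)

lemma degOn_add_degOn_compl : degOn G v X + degOn G v Xᶜ = (G.neighborSet v).ncard := by
  simpa only [degOn, ← Set.sdiff_eq] using Set.ncard_inter_add_ncard_sdiff_eq_ncard _ X

omit [Finite V] in
lemma degOn_inter_of_isBipartiteWith {A B : Set V} (hG : G.IsBipartiteWith A B) (hv : v ∈ A) :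
    degOn G v (B ∩ X) = degOn G v X := by
  rw [degOn, ← Set.inter_assoc, degOn,
    Set.inter_eq_left.mpr (SimpleGraph.isBipartiteWith_neighborSet_subset hG hv)]

omit [Finite V] in
lemma degOn_sdiff_singleton_self : degOn G v (X \ {v}) = degOn G v X := by
  unfold degOn
  congr 1
  ext u
  simp only [Set.mem_inter_iff, Set.mem_sdiff, Set.mem_singleton_iff, SimpleGraph.mem_neighborSet]
  exact ⟨fun h => ⟨h.1, h.2.1⟩, fun h => ⟨h.1, h.2, h.1.ne'⟩⟩

end DegOn

section EdgeCount

variable {V : Type*}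

/-- `e(X, Y)`, counted as ordered pairs; thus `e(X, X)` is twice the number of edges inside `X`. -/
noncomputable def edgeCount (G : SimpleGraph V) (X Y : Set V) : ℕ :=
  {p : V × V | p.1 ∈ X ∧ p.2 ∈ Y ∧ G.Adj p.1 p.2}.ncard

variable {G : SimpleGraph V} {v : V} {X X' Y : Set V}

lemma edgeCount_comm : edgeCount G X Y = edgeCount G Y X := by
  rw [edgeCount, ← Set.ncard_image_of_injective _ Prod.swap_injective, edgeCount]
  congr 1
  ext ⟨u, w⟩
  simp [G.adj_comm, and_left_comm]

lemma edgeCount_inter_right_of_neighborSet_subset (h : ∀ v ∈ X, G.neighborSet v ⊆ X') :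
    edgeCount G X (X' ∩ Y) = edgeCount G X Y := by
  unfold edgeCount
  congr 1
  ext ⟨u, w⟩
  exact ⟨fun h' => ⟨h'.1, h'.2.1.2, h'.2.2⟩, fun h' => ⟨h'.1, ⟨h _ h'.1 h'.2.2, h'.2.1⟩, h'.2.2⟩⟩

lemma edgeCount_singleton_left : edgeCount G {v} Y = degOn G v Y := by
  rw [degOn, ← Set.ncard_image_of_injective _ (Prod.mk_right_injective v), edgeCount]
  congr 1
  ext ⟨u, w⟩
  simp only [Set.mem_singleton_iff, Set.mem_ofPred_eq, Set.mem_image, Set.mem_inter_iff,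
    SimpleGraph.mem_neighborSet, Prod.mk.injEq]
  constructor
  · rintro ⟨rfl, hw, hadj⟩
    exact ⟨w, ⟨hadj, hw⟩, rfl, rfl⟩
  · rintro ⟨w, ⟨hadj, hw⟩, rfl, rfl⟩
    exact ⟨rfl, hw, hadj⟩

variable [Finite V]

lemma edgeCount_union_left (h : Disjoint X X') :
    edgeCount G (X ∪ X') Y = edgeCount G X Y + edgeCount G X' Y := by
  unfold edgeCount
  rw [← Set.ncard_union_eq <| Set.disjoint_left.mpr fun p hp hp' =>
    Set.disjoint_left.mp h hp.1 hp'.1]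
  congr 1
  ext p
  exact or_and_right

lemma edgeCount_insert_left (hv : v ∉ X) :
    edgeCount G (insert v X) Y = degOn G v Y + edgeCount G X Y := by
  rw [Set.insert_eq, edgeCount_union_left (Set.disjoint_singleton_left.mpr hv),
    edgeCount_singleton_left]

lemma edgeCount_insert_self (hv : v ∉ X) :
    edgeCount G (insert v X) (insert v X) = edgeCount G X X + 2 * degOn G v X := by
  have hdeg : degOn G v (insert v X) = degOn G v X := by
    rw [← degOn_sdiff_singleton_self, Set.insert_sdiff_self_of_notMem hv]
  rw [edgeCount_insert_left hv, hdeg, edgeCount_comm, edgeCount_insert_left hv]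
  ring

lemma edgeCount_mono_left (h : X ⊆ X') : edgeCount G X Y ≤ edgeCount G X' Y :=
  Set.ncard_le_ncard fun _ hp => ⟨h hp.1, hp.2⟩

lemma edgeCount_add_edgeCount_compl_eq_edgeCount_univ :
    edgeCount G X Y + edgeCount G X Yᶜ = edgeCount G X Set.univ := by
  rw [edgeCount_comm, edgeCount_comm (Y := Yᶜ), edgeCount_comm (Y := Set.univ),
    ← edgeCount_union_left disjoint_compl_right, Set.union_compl_self]

lemma edgeCount_le_mul_ncard {c : ℝ} (h : ∀ v ∈ X, (degOn G v Y : ℝ) ≤ c) :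
    (edgeCount G X Y : ℝ) ≤ c * X.ncard := by
  induction X, X.toFinite using Set.Finite.induction_on with
  | empty => simp [edgeCount]
  | @insert v X hv _ ih =>
    rw [edgeCount_insert_left hv, Set.ncard_insert_of_notMem hv]
    push_cast
    linarith [h v (Set.mem_insert v X), ih fun u hu => h u (Set.mem_insert_of_mem v hu)]

lemma mul_ncard_le_edgeCount {c : ℝ} (h : ∀ v ∈ X, c ≤ (degOn G v Y : ℝ)) :
    c * X.ncard ≤ edgeCount G X Y := by
  induction X, X.toFinite using Set.Finite.induction_on with
  | empty => simp [edgeCount]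
  | @insert v X hv _ ih =>
    rw [edgeCount_insert_left hv, Set.ncard_insert_of_notMem hv]
    push_cast
    linarith [h v (Set.mem_insert v X), ih fun u hu => h u (Set.mem_insert_of_mem v hu)]

lemma mul_ncard_setOf_lt_degOn_le_edgeCount (t : ℝ) :
    t * {v ∈ X | t < degOn G v Y}.ncard ≤ edgeCount G X Y :=
  (mul_ncard_le_edgeCount fun _ hv => hv.2.le).trans
    (by exact_mod_cast edgeCount_mono_left (Set.sep_subset X _))

lemma edgeCount_add_mul_ncard_setOf_degOn_lt_le {c : ℝ} (h : ∀ v ∈ X, (degOn G v Y : ℝ) ≤ c)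
    (t : ℝ) :
    edgeCount G X Y + t * {v ∈ X | (degOn G v Y : ℝ) < c - t}.ncard ≤ c * X.ncard := by
  set T := {v ∈ X | (degOn G v Y : ℝ) < c - t}
  have hTX : T ⊆ X := Set.sep_subset X _
  have hlow : (edgeCount G T Y : ℝ) ≤ (c - t) * T.ncard :=
    edgeCount_le_mul_ncard fun v hv => hv.2.le
  have hhigh : (edgeCount G (X \ T) Y : ℝ) ≤ c * (X \ T).ncard :=
    edgeCount_le_mul_ncard fun v hv => h v hv.1
  have hsplit : edgeCount G X Y = edgeCount G (X \ T) Y + edgeCount G T Y := by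
    rw [← edgeCount_union_left Set.disjoint_sdiff_left, Set.sdiff_union_of_subset hTX]
  have hcard : ((X \ T).ncard : ℝ) + T.ncard = X.ncard := by
    exact_mod_cast Set.ncard_sdiff_add_ncard_of_subset hTX
  rw [hsplit, ← hcard]
  push_cast
  linarith

end EdgeCount

section Stable

variable {V : Type*}

/-- A `d`-stable vertex set: changing the membership of any single vertex does not decrease
`edgeCount G U U - 2 * d * U.ncard`. -/
def IsStableSet (G : SimpleGraph V) (d : ℝ) (U : Set V) : Prop :=
  (∀ v ∈ U, (degOn G v U : ℝ) ≤ d) ∧ ∀ v ∉ U, d ≤ degOn G v U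

variable [Finite V] {G : SimpleGraph V}

/- Take `U` minimizing `e(U, U) - 2 d |U|` in the interval `[L, H]`. -/
lemma exists_between_forall_degOn_le_and_le_degOn {L H : Set V} (hLH : L ⊆ H) (d : ℝ) :
    ∃ U, L ⊆ U ∧ U ⊆ H ∧ (∀ v ∈ U \ L, (degOn G v U : ℝ) ≤ d) ∧ ∀ v ∈ H \ U, d ≤ degOn G v U := by
  let Φ (U : Set V) : ℝ := edgeCount G U U - 2 * d * U.ncard
  have hΦ {U : Set V} {v : V} (hv : v ∉ U) : Φ (insert v U) = Φ U + 2 * (degOn G v U - d) := by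
    simp only [Φ, edgeCount_insert_self hv, Set.ncard_insert_of_notMem hv]
    push_cast
    ring
  obtain ⟨U, ⟨hLU, hUH⟩, hmin⟩ :=
    Set.exists_min_image (Set.Icc L H) Φ (Set.toFinite _) ⟨L, le_rfl, hLH⟩
  refine ⟨U, hLU, hUH, fun v hv => ?_, fun v hv => ?_⟩
  · have hle : Φ U ≤ Φ (U \ {v}) :=
      hmin _ ⟨Set.subset_sdiff_singleton hLU hv.2, Set.sdiff_subset.trans hUH⟩
    have hstep := hΦ (U := U \ {v}) (v := v) (by simp)
    rw [Set.insert_sdiff_self_of_mem hv.1, degOn_sdiff_singleton_self] at hstep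
    linarith
  · have hle := hmin (insert v U)
      ⟨hLU.trans (Set.subset_insert v U), Set.insert_subset hv.1 hUH⟩
    linarith [hΦ hv.2]

/- Only vertices outside a set `W ⊆ Uᶜ` that is stable in the graph induced on `Uᶜ` are added to
`U`: they have at least `d` neighbours in `W`, which is never touched. -/
lemma exists_superset_ncard_eq_or_forall_degOn_compl_le {U : Set V} {m : ℕ}
    (hU : U.ncard ≤ m) (d : ℝ) :
    ∃ U', U ⊆ U' ∧ U'.ncard ≤ m ∧ (∀ v ∈ U' \ U, d ≤ degOn G v U'ᶜ) ∧
      (U'.ncard = m ∨ ∀ v ∉ U', (degOn G v U'ᶜ : ℝ) ≤ d) := by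
  obtain ⟨W, -, hWU, hW, hWc⟩ :=
    exists_between_forall_degOn_le_and_le_degOn (Set.empty_subset Uᶜ) d
  have hUW : U ⊆ Wᶜ := Set.subset_compl_comm.mp hWU
  obtain hm | hm := le_total m Wᶜ.ncard
  · obtain ⟨U', hUU', hU'W, hcard⟩ := Set.exists_subsuperset_card_eq hUW hU hm
    refine ⟨U', hUU', hcard.le, fun v hv => (hWc v ⟨hv.2, hU'W hv.1⟩).trans ?_, Or.inl hcard⟩
    exact_mod_cast degOn_mono (Set.subset_compl_comm.mp hU'W)
  · refine ⟨Wᶜ, hUW, hm, ?_, Or.inr ?_⟩ <;> rw [compl_compl]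
    · exact fun v hv => hWc v ⟨hv.2, hv.1⟩
    · exact fun v hv => hW v ⟨Set.notMem_compl_iff.mp hv, Set.notMem_empty v⟩

lemma exists_symmDiff_subset_isStableSet {U T : Set V} {d : ℝ}
    (hin : ∀ v ∈ U, v ∉ T → degOn G v U + T.ncard ≤ d)
    (hout : ∀ v ∉ U, v ∉ T → d + T.ncard ≤ degOn G v U) :
    ∃ U', symmDiff U U' ⊆ T ∧ IsStableSet G d U' := by
  obtain ⟨U', hTU', hU'T, hlow, hhigh⟩ := exists_between_forall_degOn_le_and_le_degOn
    (Set.sdiff_subset.trans Set.subset_union_left : U \ T ⊆ U ∪ T) d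
  have hchange {P Q : Set V} (h : P \ Q ⊆ T) (v : V) :
      (degOn G v P : ℝ) ≤ degOn G v Q + T.ncard := by
    exact_mod_cast degOn_le_degOn_add_ncard_sdiff.trans
      (Nat.add_le_add_left (Set.ncard_le_ncard h) _)
  have hU'U : U' \ U ⊆ T := by grind
  have hUU' : U \ U' ⊆ T := by grind
  refine ⟨U', Set.union_subset hUU' hU'U, fun v hv => ?_, fun v hv => ?_⟩
  · by_cases hvT : v ∈ U \ T
    · exact (hchange hU'U v).trans (hin v hvT.1 hvT.2)
    · exact hlow v ⟨hv, hvT⟩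
  · by_cases hvT : v ∈ U ∪ T
    · exact hhigh v ⟨hvT, hv⟩
    · linarith [hchange hUU' v, hout v (fun h => hvT (Or.inl h)) fun h => hvT (Or.inr h)]

end Stable

section Cut

variable {V : Type*}

/-- The number of neighbours of `v` on the other side of the cut `(U, Uᶜ)`. -/
noncomputable def crossDeg (G : SimpleGraph V) (U : Set V) (v : V) : ℕ :=
  degOn G v {w | w ∈ U ↔ v ∉ U}

/-- How far `U` is from containing exactly half of `S`: zero for an exact bisection of `S`. -/
noncomputable def discrepancy (S U : Set V) : ℝ :=
  |((S ∩ U).ncard : ℝ) - (S \ U).ncard|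

variable {G : SimpleGraph V} {A B S U U' : Set V} {v : V}

lemma crossDeg_of_mem (hv : v ∈ U) : crossDeg G U v = degOn G v Uᶜ := by
  simp [crossDeg, hv, Set.compl_def]

lemma crossDeg_of_notMem (hv : v ∉ U) : crossDeg G U v = degOn G v U := by
  simp [crossDeg, hv]

lemma crossDeg_compl : crossDeg G Uᶜ v = crossDeg G U v := by
  simp only [crossDeg, Set.mem_compl_iff, not_iff_not]

lemma crossDeg_of_mem_inter (hG : G.IsBipartiteWith A B) (hv : v ∈ A ∩ U) :
    crossDeg G U v = degOn G v (B \ U) := by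
  rw [crossDeg_of_mem hv.2, Set.sdiff_eq, degOn_inter_of_isBipartiteWith hG hv.1]

lemma crossDeg_of_mem_sdiff (hG : G.IsBipartiteWith A B) (hv : v ∈ A \ U) :
    crossDeg G U v = degOn G v (B ∩ U) := by
  rw [crossDeg_of_notMem hv.2, degOn_inter_of_isBipartiteWith hG hv.1]

lemma discrepancy_compl : discrepancy S Uᶜ = discrepancy S U := by
  rw [discrepancy, ← Set.sdiff_eq, Set.sdiff_compl, abs_sub_comm, discrepancy]

variable [Finite V]

lemma crossDeg_le_crossDeg_add_ncard_symmDiff (hv : v ∈ U ↔ v ∈ U') :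
    crossDeg G U v ≤ crossDeg G U' v + (symmDiff U U').ncard := by
  refine degOn_le_degOn_add_ncard_sdiff.trans (Nat.add_le_add_left (Set.ncard_le_ncard ?_) _)
  rintro w ⟨hw, hw'⟩
  simp only [Set.mem_ofPred_eq, Set.mem_symmDiff] at *
  tauto

lemma discrepancy_le_discrepancy_add_ncard_symmDiff :
    discrepancy S U' ≤ discrepancy S U + 2 * (symmDiff U U').ncard := by
  have hle {P Q : Set V} (h : P \ Q ⊆ symmDiff U U') :
      (P.ncard : ℝ) ≤ (symmDiff U U').ncard + Q.ncard := by
    exact_mod_cast (Set.ncard_le_ncard_sdiff_add_ncard P Q).trans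
      (Nat.add_le_add_right (Set.ncard_le_ncard h) _)
  have hinter : ((S ∩ U').ncard : ℝ) ≤ (symmDiff U U').ncard + (S ∩ U).ncard :=
    hle (by grind)
  have hinter' : ((S ∩ U).ncard : ℝ) ≤ (symmDiff U U').ncard + (S ∩ U').ncard :=
    hle (by grind)
  have hsdiff : ((S \ U').ncard : ℝ) ≤ (symmDiff U U').ncard + (S \ U).ncard :=
    hle (by grind)
  have hsdiff' : ((S \ U).ncard : ℝ) ≤ (symmDiff U U').ncard + (S \ U').ncard :=
    hle (by grind)
  unfold discrepancy
  refine abs_le.mpr ⟨?_, ?_⟩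
  · linarith [neg_abs_le (((S ∩ U).ncard : ℝ) - (S \ U).ncard)]
  · linarith [le_abs_self (((S ∩ U).ncard : ℝ) - (S \ U).ncard)]

lemma IsStableSet.le_crossDeg {d : ℝ} (hU : IsStableSet G d U)
    (hdeg : ∀ v, 2 * d ≤ (G.neighborSet v).ncard) (v : V) : d ≤ crossDeg G U v := by
  by_cases hv : v ∈ U
  · have hsum : (degOn G v U + degOn G v Uᶜ : ℝ) = (G.neighborSet v).ncard := by
      exact_mod_cast degOn_add_degOn_compl
    rw [crossDeg_of_mem hv]
    linarith [hU.1 v hv, hdeg v]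
  · rw [crossDeg_of_notMem hv]
    exact hU.2 v hv

lemma IsStableSet.exists_superset_forall_le_crossDeg {d : ℝ} {m : ℕ} (hU : IsStableSet G d U)
    (hm : U.ncard ≤ m) (hdeg : ∀ v, 2 * d + (m - U.ncard) ≤ (G.neighborSet v).ncard) :
    ∃ U', U ⊆ U' ∧ U'.ncard ≤ m ∧ (∀ v, d ≤ crossDeg G U' v) ∧
      (U'.ncard = m ∨ ∀ v ∈ U'ᶜ, (degOn G v U'ᶜ : ℝ) ≤ d) := by
  obtain ⟨U', hUU', hU'm, hadded, hfinal⟩ :=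
    exists_superset_ncard_eq_or_forall_degOn_compl_le hm d
  refine ⟨U', hUU', hU'm, fun v => ?_, hfinal⟩
  by_cases hvU' : v ∈ U'
  · rw [crossDeg_of_mem hvU']
    by_cases hvU : v ∈ U
    · have hsum : (degOn G v U + degOn G v Uᶜ : ℝ) = (G.neighborSet v).ncard := by
        exact_mod_cast degOn_add_degOn_compl
      have hloss : (degOn G v Uᶜ : ℝ) ≤ degOn G v U'ᶜ + (U' \ U).ncard := by
        rw [← compl_sdiff_compl]
        exact_mod_cast degOn_le_degOn_add_ncard_sdiff
      have hdiff : (U' \ U).ncard + U.ncard ≤ m :=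
        (Set.ncard_sdiff_add_ncard_of_subset hUU').trans_le hU'm
      rify at hdiff
      linarith [hU.1 v hvU, hdeg v]
    · exact hadded v ⟨hvU', hvU⟩
  · rw [crossDeg_of_notMem hvU']
    exact (hU.2 v fun h => hvU' (hUU' h)).trans (by exact_mod_cast degOn_mono hUU')

end Cut

section DiracBipartite

variable {V : Type*}

/-- A balanced bipartite graph on `2 * n` vertices, with parts `A` and `B`. -/
structure IsBalancedBipartite (G : SimpleGraph V) (A B : Set V) (n : ℕ) : Prop
    extends G.IsBipartiteWith A B where
  union_eq_univ : A ∪ B = Set.univ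
  ncard_left : A.ncard = n
  ncard_right : B.ncard = n

/-- A Dirac bipartite graph on `2 * n` vertices, with parts `A` and `B`. -/
structure IsDiracBipartite (G : SimpleGraph V) (A B : Set V) (n : ℕ) : Prop
    extends IsBalancedBipartite G A B n where
  le_degree (v : V) : (n : ℝ) / 2 ≤ (G.neighborSet v).ncard

/-- `U = A₁ ∪ B₂`, where the partitions `A = A₁ ∪ A₂` and `B = B₁ ∪ B₂` witness that `G` is
`ε`-extremal; the factor `2` is there because `edgeCount` sees each edge inside `U` twice. -/
structure IsSparseHalf (G : SimpleGraph V) (A B : Set V) (n : ℕ) (ε : ℝ) (U : Set V) : Prop where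
  discrepancy_left_le : discrepancy A U ≤ ε * n
  discrepancy_right_le : discrepancy B U ≤ ε * n
  edgeCount_le : edgeCount G U U ≤ 2 * (ε * n ^ 2)

/-- A cut `(U, Uᶜ)` roughly bisecting `A` and `B` across which almost every vertex has almost
`n / 2` neighbours. With `A₁ = A ∩ U` and `B₂ = B ∩ U` this is (Q1), (Q3) and (Q5), in a form
invariant under complementing `U`. -/
structure IsDenseCut (G : SimpleGraph V) (A B : Set V) (n : ℕ) (ν : ℝ) (U : Set V) : Prop where
  discrepancy_left_le : discrepancy A U ≤ ν * n
  discrepancy_right_le : discrepancy B U ≤ ν * n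
  ncard_setOf_crossDeg_lt_le : ({v | (crossDeg G U v : ℝ) < n / 2 - ν * n}.ncard : ℝ) ≤ ν * n

variable {G : SimpleGraph V} {A B U U' : Set V} {n : ℕ} {ε ν : ℝ}

lemma EpsExtremal.exists_isSparseHalf [Finite V] (hG : G.IsBipartiteWith A B)
    (h : EpsExtremal G A B n ε) : ∃ U, IsSparseHalf G A B n ε U := by
  obtain ⟨A₁, A₂, B₁, B₂, rfl, hA, rfl, hB, hAcard, hBcard, hedges⟩ := h
  have hAB := hG.disjoint
  have hA₁ : ∀ v ∈ A₁, G.neighborSet v ⊆ B₁ ∪ B₂ := fun v hv =>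
    SimpleGraph.isBipartiteWith_neighborSet_subset hG (Or.inl hv)
  have hB₂ : ∀ v ∈ B₂, G.neighborSet v ⊆ A₁ ∪ A₂ := fun v hv =>
    SimpleGraph.isBipartiteWith_neighborSet_subset hG.symm (Or.inr hv)
  have hA₁U : (A₁ ∪ A₂) ∩ (A₁ ∪ B₂) = A₁ := by grind
  have hA₂U : (A₁ ∪ A₂) \ (A₁ ∪ B₂) = A₂ := by grind
  have hB₂U : (B₁ ∪ B₂) ∩ (A₁ ∪ B₂) = B₂ := by grind
  have hB₁U : (B₁ ∪ B₂) \ (A₁ ∪ B₂) = B₁ := by grind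
  have hedgesU : edgeCount G (A₁ ∪ B₂) (A₁ ∪ B₂) = 2 * edgeCount G A₁ B₂ := by
    rw [edgeCount_union_left (hAB.mono Set.subset_union_left Set.subset_union_right),
      ← edgeCount_inter_right_of_neighborSet_subset hA₁,
      ← edgeCount_inter_right_of_neighborSet_subset hB₂, hA₁U, hB₂U, edgeCount_comm (X := B₂),
      two_mul]
  refine ⟨A₁ ∪ B₂, ?_, ?_, ?_⟩
  · rwa [discrepancy, hA₁U, hA₂U]
  · rwa [discrepancy, hB₂U, hB₁U, abs_sub_comm]
  · rw [hedgesU, Nat.cast_mul, Nat.cast_two]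
    exact mul_le_mul_of_nonneg_left hedges zero_le_two

namespace IsDenseCut

lemma compl (h : IsDenseCut G A B n ν U) : IsDenseCut G A B n ν Uᶜ where
  discrepancy_left_le := discrepancy_compl.trans_le h.discrepancy_left_le
  discrepancy_right_le := discrepancy_compl.trans_le h.discrepancy_right_le
  ncard_setOf_crossDeg_lt_le := by simpa only [crossDeg_compl] using h.ncard_setOf_crossDeg_lt_le

variable [Finite V]

lemma of_ncard_symmDiff_le (h : IsDenseCut G A B n ν U) {η ν' : ℝ}
    (hη : ((symmDiff U U').ncard : ℝ) ≤ η * n) (hν' : ν + 2 * η ≤ ν') :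
    IsDenseCut G A B n ν' U' := by
  have hν'n : ν * n + 2 * (η * n) ≤ ν' * n :=
    (by ring : _ = (ν + 2 * η) * n).trans_le (mul_le_mul_of_nonneg_right hν' n.cast_nonneg)
  refine ⟨?_, ?_, ?_⟩
  · linarith [discrepancy_le_discrepancy_add_ncard_symmDiff (S := A) (U := U) (U' := U'),
      h.discrepancy_left_le]
  · linarith [discrepancy_le_discrepancy_add_ncard_symmDiff (S := B) (U := U) (U' := U'),
      h.discrepancy_right_le]
  have hcover : {v | (crossDeg G U' v : ℝ) < n / 2 - ν' * n} ⊆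
      {v | (crossDeg G U v : ℝ) < n / 2 - ν * n} ∪ symmDiff U U' := by
    intro v (hv : (crossDeg G U' v : ℝ) < n / 2 - ν' * n)
    by_cases hside : v ∈ symmDiff U U'
    · exact Or.inr hside
    have hle : (crossDeg G U v : ℝ) ≤ crossDeg G U' v + (symmDiff U U').ncard := by
      exact_mod_cast crossDeg_le_crossDeg_add_ncard_symmDiff
        (by rw [Set.mem_symmDiff] at hside; tauto)
    exact Or.inl (show (crossDeg G U v : ℝ) < n / 2 - ν * n by linarith)
  have hcard : ({v | (crossDeg G U' v : ℝ) < n / 2 - ν' * n}.ncard : ℝ) ≤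
      {v | (crossDeg G U v : ℝ) < n / 2 - ν * n}.ncard + (symmDiff U U').ncard := by
    exact_mod_cast (Set.ncard_le_ncard hcover).trans (Set.ncard_union_le _ _)
  linarith [h.ncard_setOf_crossDeg_lt_le]

lemma ncard_setOf_degOn_lt_le (h : IsDenseCut G A B n ν U) {S Y : Set V}
    (hSY : ∀ v ∈ S, crossDeg G U v = degOn G v Y) :
    ({v ∈ S | (degOn G v Y : ℝ) < n / 2 - ν * n}.ncard : ℝ) ≤ ν * n := by
  have hsub : {v ∈ S | (degOn G v Y : ℝ) < n / 2 - ν * n} ⊆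
      {v | (crossDeg G U v : ℝ) < n / 2 - ν * n} := by
    rintro v ⟨hvS, hv⟩
    rwa [← hSY v hvS] at hv
  exact le_trans (by exact_mod_cast Set.ncard_le_ncard hsub) h.ncard_setOf_crossDeg_lt_le

end IsDenseCut

variable [Finite V]

namespace IsBalancedBipartite

omit [Finite V] in
lemma symm (hG : IsBalancedBipartite G A B n) : IsBalancedBipartite G B A n where
  toIsBipartiteWith := hG.toIsBipartiteWith.symm
  union_eq_univ := by rw [Set.union_comm, hG.union_eq_univ]
  ncard_left := hG.ncard_right
  ncard_right := hG.ncard_left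

lemma ncard_inter_add_ncard_inter (hG : IsBalancedBipartite G A B n) (U : Set V) :
    (A ∩ U).ncard + (B ∩ U).ncard = U.ncard := by
  rw [← Set.ncard_union_eq (hG.disjoint.mono Set.inter_subset_left Set.inter_subset_left),
    ← Set.union_inter_distrib_right, hG.union_eq_univ, Set.univ_inter]

lemma ncard_add_ncard_compl (hG : IsBalancedBipartite G A B n) (U : Set V) :
    U.ncard + Uᶜ.ncard = 2 * n := by
  rw [Set.ncard_add_ncard_compl, ← Set.ncard_univ, ← hG.ncard_inter_add_ncard_inter Set.univ,
    Set.inter_univ, Set.inter_univ, hG.ncard_left, hG.ncard_right, two_mul]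

lemma ncard_inter_add_ncard_sdiff_left (hG : IsBalancedBipartite G A B n) (U : Set V) :
    (A ∩ U).ncard + (A \ U).ncard = n := by
  rw [Set.ncard_inter_add_ncard_sdiff_eq_ncard, hG.ncard_left]

lemma abs_ncard_inter_sub_ncard_sdiff_le (hG : IsBalancedBipartite G A B n) (U : Set V) :
    |((A ∩ U).ncard : ℝ) - (B \ U).ncard| ≤ (discrepancy A U + discrepancy B U) / 2 := by
  have hA : ((A ∩ U).ncard + (A \ U).ncard : ℝ) = n := by
    exact_mod_cast hG.ncard_inter_add_ncard_sdiff_left U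
  have hB : ((B ∩ U).ncard + (B \ U).ncard : ℝ) = n := by
    exact_mod_cast hG.symm.ncard_inter_add_ncard_sdiff_left U
  have heq : ((A ∩ U).ncard : ℝ) - (B \ U).ncard =
      (((A ∩ U).ncard - (A \ U).ncard) + ((B ∩ U).ncard - (B \ U).ncard)) / 2 := by linarith
  rw [heq, abs_div, abs_two]
  exact div_le_div_of_nonneg_right (abs_add_le _ _) zero_le_two

lemma abs_ncard_sub_le (hG : IsBalancedBipartite G A B n) (U : Set V) :
    |(U.ncard : ℝ) - n| ≤ (discrepancy A U + discrepancy B U) / 2 := by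
  convert hG.abs_ncard_inter_sub_ncard_sdiff_le U using 2
  have hU : ((A ∩ U).ncard + (B ∩ U).ncard : ℝ) = U.ncard := by
    exact_mod_cast hG.ncard_inter_add_ncard_inter U
  have hB : ((B ∩ U).ncard + (B \ U).ncard : ℝ) = n := by
    exact_mod_cast hG.symm.ncard_inter_add_ncard_sdiff_left U
  linarith

lemma two_mul_degOn_le_of_mem_left (hG : IsBalancedBipartite G A B n) {v : V} (hv : v ∈ A)
    (U : Set V) : 2 * (degOn G v U : ℝ) ≤ n + discrepancy B U := by
  have hdeg : (degOn G v U : ℝ) ≤ (B ∩ U).ncard := by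
    rw [← degOn_inter_of_isBipartiteWith hG.toIsBipartiteWith hv]
    exact_mod_cast degOn_le_ncard
  have hB : ((B ∩ U).ncard + (B \ U).ncard : ℝ) = n := by
    exact_mod_cast hG.symm.ncard_inter_add_ncard_sdiff_left U
  have habs : ((B ∩ U).ncard : ℝ) - (B \ U).ncard ≤ discrepancy B U := le_abs_self _
  linarith

end IsBalancedBipartite

namespace IsDiracBipartite

omit [Finite V] in
lemma symm (hG : IsDiracBipartite G A B n) : IsDiracBipartite G B A n where
  toIsBalancedBipartite := hG.toIsBalancedBipartite.symm
  le_degree := hG.le_degree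

lemma le_degOn_add_degOn_compl (hG : IsDiracBipartite G A B n) (U : Set V) (v : V) :
    (n : ℝ) / 2 ≤ degOn G v U + degOn G v Uᶜ :=
  (hG.le_degree v).trans_eq (by exact_mod_cast degOn_add_degOn_compl.symm)

lemma le_degOn_inter_add_ncard_sdiff (hG : IsDiracBipartite G A B n) {v : V} (hv : v ∈ A)
    (U : Set V) : (n : ℝ) / 2 ≤ degOn G v (B ∩ U) + (B \ U).ncard := by
  have hcompl : (degOn G v Uᶜ : ℝ) ≤ (B \ U).ncard := by
    rw [← degOn_inter_of_isBipartiteWith hG.toIsBipartiteWith hv, ← Set.sdiff_eq]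
    exact_mod_cast degOn_le_ncard
  rw [degOn_inter_of_isBipartiteWith hG.toIsBipartiteWith hv]
  linarith [hG.le_degOn_add_degOn_compl U v]

/- The excess `|A ∩ U| - |B \ U| = |U| - n` is at most twice the larger of `|A ∩ U| - n / 2` and
`|B ∩ U| - n / 2`; these bound the degrees into `U` from below on `B` and `A` respectively. -/
lemma half_sub_le_degOn_inter_or (hG : IsDiracBipartite G A B n) (hU : n ≤ U.ncard) :
    (∀ v ∈ A ∩ U, (((A ∩ U).ncard - (B \ U).ncard : ℕ) : ℝ) / 2 ≤ degOn G v (B ∩ U)) ∨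
      ∀ v ∈ B ∩ U, (((A ∩ U).ncard - (B \ U).ncard : ℕ) : ℝ) / 2 ≤ degOn G v (A ∩ U) := by
  have hUcard := hG.ncard_inter_add_ncard_inter U
  have hAcard := hG.ncard_inter_add_ncard_sdiff_left U
  have hBcard := hG.symm.ncard_inter_add_ncard_sdiff_left U
  rw [Nat.cast_sub (by omega)]
  rify at hAcard hBcard
  obtain hle | hle := le_total ((A ∩ U).ncard : ℝ) (B ∩ U).ncard
  · exact Or.inl fun v hv => by linarith [hG.le_degOn_inter_add_ncard_sdiff hv.1 U]
  · exact Or.inr fun v hv => by linarith [hG.symm.le_degOn_inter_add_ncard_sdiff hv.1 U]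

end IsDiracBipartite

lemma IsDenseCut.of_forall_notMem (hG : IsDiracBipartite G A B n) {T : Set V}
    (hA : discrepancy A U ≤ ν * n) (hB : discrepancy B U ≤ ν * n) (hT : (T.ncard : ℝ) ≤ ν * n)
    (hin : ∀ v ∈ U, v ∉ T → (degOn G v U : ℝ) ≤ ν * n)
    (hout : ∀ v ∉ U, v ∉ T → n / 2 - ν * n ≤ degOn G v U) : IsDenseCut G A B n ν U := by
  have hsub : {v | (crossDeg G U v : ℝ) < n / 2 - ν * n} ⊆ T := by
    intro v (hv : (crossDeg G U v : ℝ) < n / 2 - ν * n)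
    by_contra hvT
    by_cases hvU : v ∈ U
    · rw [crossDeg_of_mem hvU] at hv
      linarith [hin v hvU hvT, hG.le_degOn_add_degOn_compl U v]
    · rw [crossDeg_of_notMem hvU] at hv
      linarith [hout v hvU hvT]
  exact ⟨hA, hB, le_trans (by exact_mod_cast Set.ncard_le_ncard hsub) hT⟩

/- Take `A₁ = A ∩ U`, `A₂ = A \ U`, `B₁ = B \ U` and `B₂ = B ∩ U`. -/
lemma IsDenseCut.superExtremal (hG : IsDiracBipartite G A B n) {ν₁ ν₂ : ℝ}
    (hU : IsDenseCut G A B n ν₁ U) (hcross : ∀ v, ν₂ * n ≤ crossDeg G U v) (hcard : n ≤ U.ncard)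
    (hsparse : U.ncard = n ∨ ∀ v ∈ U, (degOn G v U : ℝ) ≤ ν₂ * n) :
    SuperExtremal G A B n ν₁ ν₂ := by
  have hUcard := hG.ncard_inter_add_ncard_inter U
  have hBcard := hG.symm.ncard_inter_add_ncard_sdiff_left U
  have hmono {v : V} {S : Set V} (h : (degOn G v U : ℝ) ≤ ν₂ * n) :
      (degOn G v (S ∩ U) : ℝ) ≤ ν₂ * n :=
    le_trans (by exact_mod_cast degOn_mono Set.inter_subset_right) h
  have hA₁ : ∀ v ∈ A ∩ U, crossDeg G U v = degOn G v (B \ U) :=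
    fun _ => crossDeg_of_mem_inter hG.toIsBipartiteWith
  have hA₂ : ∀ v ∈ A \ U, crossDeg G U v = degOn G v (B ∩ U) :=
    fun _ => crossDeg_of_mem_sdiff hG.toIsBipartiteWith
  have hB₁ : ∀ v ∈ B \ U, crossDeg G U v = degOn G v (A ∩ U) :=
    fun _ => crossDeg_of_mem_sdiff hG.symm.toIsBipartiteWith
  have hB₂ : ∀ v ∈ B ∩ U, crossDeg G U v = degOn G v (A \ U) :=
    fun _ => crossDeg_of_mem_inter hG.symm.toIsBipartiteWith
  refine ⟨A ∩ U, A \ U, B \ U, B ∩ U, Set.inter_union_sdiff A U, Set.disjoint_sdiff_inter.symm,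
    Set.sdiff_union_inter B U, Set.disjoint_sdiff_inter,
    hU.ncard_setOf_degOn_lt_le hA₁, hU.ncard_setOf_degOn_lt_le hA₂,
    fun v hv => hA₁ v hv ▸ hcross v, fun v hv => hA₂ v hv ▸ hcross v,
    hU.ncard_setOf_degOn_lt_le hB₁, hU.ncard_setOf_degOn_lt_le hB₂,
    fun v hv => hB₁ v hv ▸ hcross v, fun v hv => hB₂ v hv ▸ hcross v,
    ?_, hU.discrepancy_left_le, ?_, ?_, by omega, hG.half_sub_le_degOn_inter_or hcard⟩
  · linarith [hG.abs_ncard_inter_sub_ncard_sdiff_le U, hU.discrepancy_left_le,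
      hU.discrepancy_right_le]
  · exact hsparse.imp (by omega) fun h v hv => hmono (h v hv.2)
  · exact hsparse.imp (by omega) fun h v hv => hmono (h v hv.2)

lemma IsDenseCut.superExtremal_of_isStableSet (hG : IsDiracBipartite G A B n) {ν₁ ν₂ : ℝ}
    (hU : IsDenseCut G A B n ν U) (hstable : IsStableSet G (ν₂ * n) U) (hν₁ : 3 * ν ≤ ν₁)
    (hν₂ : 2 * ν₂ + ν ≤ 1 / 2) (hν : 0 ≤ ν) : SuperExtremal G A B n ν₁ ν₂ := by
  have hn : (0 : ℝ) ≤ n := n.cast_nonneg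
  have hbound : 2 * (ν₂ * n) + ν * n ≤ n / 2 := by nlinarith
  have hνn : 0 ≤ ν * n := mul_nonneg hν hn
  obtain hcard | hcard := le_total n U.ncard
  · have hU₁ : IsDenseCut G A B n ν₁ U :=
      hU.of_ncard_symmDiff_le (η := 0) (by simp) (by linarith)
    refine hU₁.superExtremal hG (hstable.le_crossDeg fun v => ?_) hcard (Or.inr hstable.1)
    linarith [hG.le_degree v]
  have hUn : n - U.ncard ≤ ν * n := by
    linarith [(abs_le.mp (hG.abs_ncard_sub_le U)).1, hU.discrepancy_left_le,
      hU.discrepancy_right_le]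
  obtain ⟨U', hUU', hU'n, hcross', hfinal⟩ :=
    hstable.exists_superset_forall_le_crossDeg hcard fun v => by linarith [hG.le_degree v]
  have hsymm : ((symmDiff U U').ncard : ℝ) ≤ ν * n := by
    have hdiff : (U' \ U).ncard + U.ncard ≤ n :=
      (Set.ncard_sdiff_add_ncard_of_subset hUU').trans_le hU'n
    rw [symmDiff_of_le hUU']
    rify at hdiff
    linarith
  have hU' : IsDenseCut G A B n ν₁ U' := hU.of_ncard_symmDiff_le hsymm (by linarith)
  obtain heq | hsparse := hfinal
  · exact hU'.superExtremal hG hcross' heq.ge (Or.inl heq)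
  · exact hU'.compl.superExtremal hG (by simpa only [crossDeg_compl] using hcross')
      (by linarith [hG.ncard_add_ncard_compl U']) (Or.inr hsparse)

namespace IsSparseHalf

omit [Finite V] in
lemma nonneg (hU : IsSparseHalf G A B n ε U) (hn : 0 < n) : 0 ≤ ε :=
  nonneg_of_mul_nonneg_left ((abs_nonneg _).trans hU.discrepancy_left_le) (by exact_mod_cast hn)

lemma mul_ncard_setOf_mul_lt_degOn_le (hU : IsSparseHalf G A B n ε U) (hn : 0 < n) (δ : ℝ) :
    δ * {v ∈ U | δ * n < degOn G v U}.ncard ≤ 2 * ε * n := by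
  have hn' : (0 : ℝ) < n := by exact_mod_cast hn
  refine le_of_mul_le_mul_right ?_ hn'
  linarith [mul_ncard_setOf_lt_degOn_le_edgeCount (G := G) (X := U) (Y := U) (δ * n),
    hU.edgeCount_le]

/- `e(Uᶜ, U) = e(U, Uᶜ)` is at least `|U| n / 2 - e(U, U)`, which is nearly the maximum possible
since a vertex has at most `(1 + ε) n / 2` neighbours in `U`. -/
lemma mul_ncard_setOf_degOn_lt_le (hG : IsDiracBipartite G A B n) (hU : IsSparseHalf G A B n ε U)
    (hn : 0 < n) (hε₁ : ε ≤ 1) (δ : ℝ) :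
    δ * {v ∈ Uᶜ | (degOn G v U : ℝ) < n / 2 - δ * n}.ncard ≤ 4 * ε * n := by
  have hn' : (0 : ℝ) < n := by exact_mod_cast hn
  have hε₀ := hU.nonneg hn
  have hupper (v : V) : (degOn G v U : ℝ) ≤ (1 + ε) * n / 2 := by
    obtain hv | hv := hG.union_eq_univ.symm ▸ Set.mem_univ v
    · linarith [hG.two_mul_degOn_le_of_mem_left hv U, hU.discrepancy_right_le]
    · linarith [hG.symm.two_mul_degOn_le_of_mem_left hv U, hU.discrepancy_left_le]
  have hlower : (n : ℝ) / 2 * U.ncard ≤ edgeCount G U U + edgeCount G Uᶜ U := by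
    rw [edgeCount_comm (X := Uᶜ)]
    norm_cast
    rw [edgeCount_add_edgeCount_compl_eq_edgeCount_univ]
    refine mul_ncard_le_edgeCount fun v _ => ?_
    simpa only [degOn, Set.inter_univ] using hG.le_degree v
  have hmarkov := edgeCount_add_mul_ncard_setOf_degOn_lt_le (X := Uᶜ) (fun v _ => hupper v)
    (δ * n + ε * n / 2)
  rw [show (1 + ε) * n / 2 - (δ * n + ε * n / 2) = (n : ℝ) / 2 - δ * n by ring] at hmarkov
  set m : ℝ := ({v ∈ Uᶜ | (degOn G v U : ℝ) < n / 2 - δ * n}.ncard : ℝ)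
  have hUcard : (n : ℝ) - ε * n ≤ U.ncard := by
    linarith [(abs_le.mp (hG.abs_ncard_sub_le U)).1, hU.discrepancy_left_le,
      hU.discrepancy_right_le]
  have hcompl : (U.ncard : ℝ) + Uᶜ.ncard = 2 * n := by exact_mod_cast hG.ncard_add_ncard_compl U
  have hm : 0 ≤ ε * n / 2 * m := by positivity
  refine le_of_mul_le_mul_right ?_ hn'
  calc δ * m * n
      ≤ (1 + ε) * n / 2 * Uᶜ.ncard - n / 2 * U.ncard + edgeCount G U U := by linarith
    _ ≤ (1 + ε) * n / 2 * (n + ε * n) - n / 2 * (n - ε * n) + 2 * (ε * n ^ 2) := by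
        gcongr
        · linarith
        · exact hU.edgeCount_le
    _ = (7 / 2 * ε + ε * ε / 2) * n ^ 2 := by ring
    _ ≤ (7 / 2 * ε + ε * 1 / 2) * n ^ 2 := by gcongr
    _ = 4 * ε * n * n := by ring

lemma exists_ncard_le_forall_notMem (hG : IsDiracBipartite G A B n) (hU : IsSparseHalf G A B n ε U)
    (hn : 0 < n) (hε₁ : ε ≤ 1) {δ : ℝ} (hδ : 0 < δ) (hεδ : 6 * ε ≤ δ ^ 2) :
    ∃ T : Set V, (T.ncard : ℝ) ≤ δ * n ∧ (∀ v ∈ U, v ∉ T → (degOn G v U : ℝ) ≤ δ * n) ∧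
      ∀ v ∉ U, v ∉ T → n / 2 - δ * n ≤ degOn G v U := by
  set T₁ := {v ∈ U | δ * n < degOn G v U}
  set T₂ := {v ∈ Uᶜ | (degOn G v U : ℝ) < n / 2 - δ * n}
  refine ⟨T₁ ∪ T₂, le_of_mul_le_mul_left ?_ hδ, fun v hvU hvT => ?_, fun v hvU hvT => ?_⟩
  · calc δ * (T₁ ∪ T₂).ncard
        ≤ δ * (T₁.ncard + T₂.ncard) := by gcongr; exact_mod_cast Set.ncard_union_le T₁ T₂
      _ = δ * T₁.ncard + δ * T₂.ncard := mul_add _ _ _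
      _ ≤ 2 * ε * n + 4 * ε * n := add_le_add (hU.mul_ncard_setOf_mul_lt_degOn_le hn δ)
          (hU.mul_ncard_setOf_degOn_lt_le hG hn hε₁ δ)
      _ = 6 * ε * n := by ring
      _ ≤ δ ^ 2 * n := by gcongr
      _ = δ * (δ * n) := by ring
  · exact not_lt.mp fun h => hvT (Or.inl ⟨hvU, h⟩)
  · exact not_lt.mp fun h => hvT (Or.inr ⟨hvU, h⟩)

lemma exists_isDenseCut_isStableSet (hG : IsDiracBipartite G A B n)
    (hU : IsSparseHalf G A B n ε U) (hn : 0 < n) {δ d : ℝ} (hδ : 0 < δ)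
    (hεδ : 6 * ε ≤ δ ^ 2) (hδd : 2 * δ ≤ d) (hd : d + 2 * δ ≤ 1 / 2) :
    ∃ U', IsDenseCut G A B n (3 * δ) U' ∧ IsStableSet G (d * n) U' := by
  have hεδ' : ε ≤ δ := by nlinarith
  obtain ⟨T, hT, hin, hout⟩ := hU.exists_ncard_le_forall_notMem hG hn (by linarith) hδ hεδ
  have hdense : IsDenseCut G A B n δ U :=
    .of_forall_notMem hG (hU.discrepancy_left_le.trans (by gcongr))
      (hU.discrepancy_right_le.trans (by gcongr)) hT hin hout
  have hδdn : 2 * (δ * n) ≤ d * n := by nlinarith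
  have hdn : d * n + 2 * (δ * n) ≤ n / 2 := by nlinarith
  obtain ⟨U', hsymm, hstable⟩ := exists_symmDiff_subset_isStableSet (G := G) (U := U) (T := T)
    (d := d * n) (fun v hvU hvT => by linarith [hin v hvU hvT])
    fun v hvU hvT => by linarith [hout v hvU hvT]
  have hsymmT : ((symmDiff U U').ncard : ℝ) ≤ δ * n :=
    le_trans (by exact_mod_cast Set.ncard_le_ncard hsymm) hT
  exact ⟨U', hdense.of_ncard_symmDiff_le hsymmT (by linarith), hstable⟩

end IsSparseHalf

end DiracBipartite

theorem extremal_implies_superextremal_general {V : Type*} [Finite V] {G : SimpleGraph V}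
    {A B : Set V} {n : ℕ} (hG : IsDiracBipartite G A B n) (hn : 0 < n) {ε ν₁ ν₂ : ℝ}
    (hν₁ : 0 < ν₁) (hν : ν₁ ≤ ν₂) (hν₂ : ν₂ ≤ 1 / 5) (hε : ε ≤ ν₁ ^ 2 / 600)
    (h : EpsExtremal G A B n ε) : SuperExtremal G A B n ν₁ ν₂ := by
  obtain ⟨U₀, hU₀⟩ := h.exists_isSparseHalf hG.toIsBipartiteWith
  obtain ⟨U, hdense, hstable⟩ := hU₀.exists_isDenseCut_isStableSet hG hn (δ := ν₁ / 10)
    (d := ν₂) (by linarith) (by linarith) (by linarith) (by linarith)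
  exact hdense.superExtremal_of_isStableSet hG hstable (by linarith) (by linarith) (by linarith)

/-- every ε-extremal Dirac bipartite graph on 2n vertices is
(ν₁,ν₂)-superextremal. -/
theorem extremal_implies_superextremal :
    ∃ ν₂₀ ∈ Set.Ioo (0 : ℝ) 1, ∀ ν₂ ∈ Set.Ioc (0 : ℝ) ν₂₀,
    ∃ ν₁₀ ∈ Set.Ioc (0 : ℝ) ν₂, ∀ ν₁ ∈ Set.Ioc (0 : ℝ) ν₁₀,
    ∃ ε₀ : ℝ, 0 < ε₀ ∧ ∀ ε ∈ Set.Ioc (0 : ℝ) ε₀,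
    ∃ n₀ : ℕ, ∀ n : ℕ, n₀ ≤ n →
      ∀ (V : Type) [Fintype V] (G : SimpleGraph V) (A B : Set V),
        A ∪ B = Set.univ → Disjoint A B → A.ncard = n → B.ncard = n →
        (∀ u v : V, G.Adj u v → (u ∈ A ∧ v ∈ B) ∨ (u ∈ B ∧ v ∈ A)) →
        (∀ v : V, (n : ℝ) / 2 ≤ ((G.neighborSet v).ncard : ℝ)) →
        EpsExtremal G A B n ε →
        SuperExtremal G A B n ν₁ ν₂ := by
  refine ⟨1 / 5, by norm_num, fun ν₂ hν₂ => ⟨ν₂, ⟨hν₂.1, le_rfl⟩, fun ν₁ hν₁ => ?_⟩⟩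
  refine ⟨ν₁ ^ 2 / 600, div_pos (pow_pos hν₁.1 2) (by norm_num), fun ε hε => ⟨1, ?_⟩⟩
  intro n hn V _ G A B hAB hdisj hA hB hadj hdeg
  exact extremal_implies_superextremal_general ⟨⟨⟨hdisj, fun _ _ => hadj _ _⟩, hAB, hA, hB⟩, hdeg⟩
    hn hν₁.1 hν₁.2 hν₂.2 hε.2
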